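/- arXiv:2309.09962 — 3 statements merged into one kernel-verified Lean document; each statement's English description precedes it below -/
import Mathlib

section
/- The group G acts transitively on the set M_{−1,0} = {X ∈ ℝ^{n+2} : Φ(X,X) = −1, Φ(I,X) = 0, X ∉ ℝ·I}: for any X, Y ∈ M_{−1,0} there exists A ∈ G with A X = Y. (Flat-model orbit decomposition: the 'Ti' boundary piece M_{−1,0} is a single orbit of the Poincaré subgroup.) -/
/-- The diagonal symmetric bilinear form on `ℝ^m` whose first `k` diagonal
entries are `-1` and the remaining ones are `+1`. -/
def formSig (k m : ℕ) (x y : Fin m → ℝ) : ℝ :=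
  ∑ i : Fin m, (if (i : ℕ) < k then -(x i * y i) else x i * y i)

/-- `A` belongs to the 'Poincaré subgroup' of `SL(n+2,ℝ)` determined by the signature
`(2,n)` form `Φ = formSig 2 (n+2)` and the null vector `I`: it has determinant one,
preserves `Φ`, and fixes `I`. -/
def IsPoincareMat (n : ℕ) (I : Fin (n + 2) → ℝ)
    (A : Matrix (Fin (n + 2)) (Fin (n + 2)) ℝ) : Prop :=
  A.det = 1 ∧
    (∀ x y : Fin (n + 2) → ℝ,
      formSig 2 (n + 2) (A.mulVec x) (A.mulVec y) = formSig 2 (n + 2) x y) ∧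
    A.mulVec I = I

/-- The set `M_{λ,s} = {X : Φ(X,X) = λ, Φ(I,X) = s, X ∉ ℝ·I}`. -/
def Mset (n : ℕ) (I : Fin (n + 2) → ℝ) (lam s : ℝ) : Set (Fin (n + 2) → ℝ) :=
  {X | formSig 2 (n + 2) X X = lam ∧ formSig 2 (n + 2) I X = s ∧ ¬ ∃ c : ℝ, X = c • I}

theorem fs_eq (k m : ℕ) (x y : Fin m → ℝ) :
    formSig k m x y = (fun i : Fin m => (if (i : ℕ) < k then -1 else 1) * x i) ⬝ᵥ y := by
  unfold formSig dotProduct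
  refine Finset.sum_congr rfl fun i _ => ?_
  by_cases h : (i : ℕ) < k <;> simp [h]

theorem fs_comm (k m : ℕ) (x y : Fin m → ℝ) : formSig k m x y = formSig k m y x := by
  unfold formSig
  refine Finset.sum_congr rfl fun i _ => ?_
  split_ifs <;> ring

theorem fs_add_right (k m : ℕ) (x y z : Fin m → ℝ) :
    formSig k m x (y + z) = formSig k m x y + formSig k m x z := by
  simp only [fs_eq, dotProduct_add]

theorem fs_sub_right (k m : ℕ) (x y z : Fin m → ℝ) :
    formSig k m x (y - z) = formSig k m x y - formSig k m x z := by
  simp only [fs_eq, dotProduct_sub]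

theorem fs_smul_right (k m : ℕ) (c : ℝ) (x y : Fin m → ℝ) :
    formSig k m x (c • y) = c * formSig k m x y := by
  simp only [fs_eq, dotProduct_smul, smul_eq_mul]

theorem fs_add_left (k m : ℕ) (x y z : Fin m → ℝ) :
    formSig k m (y + z) x = formSig k m y x + formSig k m z x := by
  rw [fs_comm, fs_add_right, fs_comm k m x, fs_comm k m x]

theorem fs_sub_left (k m : ℕ) (x y z : Fin m → ℝ) :
    formSig k m (y - z) x = formSig k m y x - formSig k m z x := by
  rw [fs_comm, fs_sub_right, fs_comm k m x, fs_comm k m x]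

theorem fs_smul_left (k m : ℕ) (c : ℝ) (x y : Fin m → ℝ) :
    formSig k m (c • y) x = c * formSig k m y x := by
  rw [fs_comm, fs_smul_right, fs_comm k m x]

/-- Reflections. -/
theorem exists_refl (k m : ℕ) (v : Fin m → ℝ) (hv : formSig k m v v ≠ 0) :
    ∃ A : Matrix (Fin m) (Fin m) ℝ, A.det = -1 ∧
      (∀ x, A.mulVec x = x - (2 * formSig k m v x / formSig k m v v) • v) ∧
      ∀ x y, formSig k m (A.mulVec x) (A.mulVec y) = formSig k m x y := by
  have key : ∃ A : Matrix (Fin m) (Fin m) ℝ, A.det = -1 ∧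
      (∀ x, A.mulVec x = x - (2 * formSig k m v x / formSig k m v v) • v) := by
    refine ⟨1 + Matrix.vecMulVec ((-2 / formSig k m v v) • v)
      (fun i : Fin m => (if (i : ℕ) < k then -1 else 1) * v i), ?_, ?_⟩
    · rw [Matrix.vecMulVec_eq Unit, Matrix.det_one_add_replicateCol_mul_replicateRow,
        dotProduct_smul, ← fs_eq, smul_eq_mul]
      field_simp
      norm_num
    · intro x
      rw [Matrix.add_mulVec, Matrix.one_mulVec, Matrix.vecMulVec_mulVec, ← fs_eq]
      ext i
      simp
      ring
  obtain ⟨A, h1, h2⟩ := key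
  refine ⟨A, h1, h2, fun x y => ?_⟩
  rw [h2, h2]
  simp only [fs_sub_left, fs_sub_right, fs_smul_left, fs_smul_right]
  rw [fs_comm k m x v]
  field_simp
  ring

theorem exists_orth (n : ℕ) (hn : 2 ≤ n) (I Y : Fin (n + 2) → ℝ) (hI : I ≠ 0)
    (hII : formSig 2 (n + 2) I I = 0) (hYY : formSig 2 (n + 2) Y Y = -1)
    (hIY : formSig 2 (n + 2) I Y = 0) :
    ∃ w, formSig 2 (n + 2) I w = 0 ∧ formSig 2 (n + 2) Y w = 0 ∧
      formSig 2 (n + 2) w w ≠ 0 := by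
  -- a vector orthogonal to `I`, `Y` and Euclidean-orthogonal to `I`
  let f : (Fin (n + 2) → ℝ) →ₗ[ℝ] (Fin 3 → ℝ) :=
    { toFun := fun w => ![formSig 2 (n + 2) I w, formSig 2 (n + 2) Y w, I ⬝ᵥ w]
      map_add' := by
        intro x y; ext i
        fin_cases i <;> simp [fs_add_right, dotProduct_add]
      map_smul' := by
        intro c x; ext i
        fin_cases i <;> simp [fs_smul_right, dotProduct_smul] }
  obtain ⟨w, hw, hw0⟩ := (Submodule.ne_bot_iff _).1
    (LinearMap.ker_ne_bot_of_finrank_lt (f := f) (by simp; omega))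
  have hw' : ![formSig 2 (n + 2) I w, formSig 2 (n + 2) Y w, I ⬝ᵥ w] = 0 := hw
  have hIw : formSig 2 (n + 2) I w = 0 := congrFun hw' 0
  have hYw : formSig 2 (n + 2) Y w = 0 := congrFun hw' 1
  have hEw : I ⬝ᵥ w = 0 := congrFun hw' 2
  refine ⟨w, hIw, hYw, fun hww => ?_⟩
  let g : (Fin 3 → ℝ) →ₗ[ℝ] (Fin 2 → ℝ) :=
    { toFun := fun a => ![a 0 * I 0 + a 1 * Y 0 + a 2 * w 0, a 0 * I 1 + a 1 * Y 1 + a 2 * w 1]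
      map_add' := by
        intro x y; ext i
        fin_cases i <;> simp <;> ring
      map_smul' := by
        intro c x; ext i
        fin_cases i <;> simp <;> ring }
  obtain ⟨a, ha, ha0⟩ := (Submodule.ne_bot_iff _).1
    (LinearMap.ker_ne_bot_of_finrank_lt (f := g) (by simp))
  have ha' : ![a 0 * I 0 + a 1 * Y 0 + a 2 * w 0, a 0 * I 1 + a 1 * Y 1 + a 2 * w 1] = 0 := ha
  have e0 : a 0 * I 0 + a 1 * Y 0 + a 2 * w 0 = 0 := congrFun ha' 0
  have e1 : a 0 * I 1 + a 1 * Y 1 + a 2 * w 1 = 0 := congrFun ha' 1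
  set v : Fin (n + 2) → ℝ := a 0 • I + a 1 • Y + a 2 • w with hv
  have hQ : formSig 2 (n + 2) v v = - (a 1) ^ 2 := by
    simp only [hv, fs_add_left, fs_add_right, fs_smul_left, fs_smul_right]
    rw [fs_comm 2 (n + 2) Y I, fs_comm 2 (n + 2) w I, fs_comm 2 (n + 2) w Y,
      hII, hYY, hIY, hIw, hYw, hww]
    ring
  have hE : formSig 2 (n + 2) v v = v ⬝ᵥ v := by
    unfold formSig dotProduct
    refine Finset.sum_congr rfl fun i _ => ?_
    split_ifs with h
    · have : v i = 0 := by
        have hi : i = 0 ∨ i = 1 := by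
          rcases i with ⟨i, hi⟩
          simp only [Fin.ext_iff, Fin.val_zero, Fin.val_one]
          simp only at h
          omega
        rcases hi with rfl | rfl
        · simpa [hv] using e0
        · simpa [hv] using e1
      simp [this]
    · rfl
  have hpos : 0 ≤ v ⬝ᵥ v := Finset.sum_nonneg fun i _ => mul_self_nonneg (v i)
  have ha1 : a 1 = 0 := by
    have : (a 1) ^ 2 = 0 := by nlinarith [sq_nonneg (a 1)]
    simpa using this
  have hv0 : v = 0 := by
    rw [← dotProduct_self_eq_zero, ← hE, hQ, ha1]; simp
  have h3 : a 0 • I + a 2 • w = 0 := by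
    rw [← hv0, hv, ha1]; simp
  have ha00 : a 0 = 0 := by
    have := congrArg (fun z => I ⬝ᵥ z) h3
    simp only [dotProduct_add, dotProduct_smul, hEw, smul_eq_mul, dotProduct_zero, mul_zero,
      add_zero] at this
    rcases mul_eq_zero.1 this with h | h
    · exact h
    · exact absurd (dotProduct_self_eq_zero.1 h) hI
  have ha2 : a 2 = 0 := by
    rw [ha00, zero_smul, zero_add] at h3
    exact (smul_eq_zero.1 h3).resolve_right hw0
  apply ha0
  ext i
  fin_cases i
  · exact ha00
  · exact ha1
  · exact ha2

/-- The Poincaré subgroup acts transitively on the flat-model boundary piece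
`Ti = M_{-1,0}`. -/
theorem poincare_transitive_on_Ti
    (n : ℕ) (hn : 2 ≤ n) (I : Fin (n + 2) → ℝ) (hI : I ≠ 0)
    (hII : formSig 2 (n + 2) I I = 0)
    (X Y : Fin (n + 2) → ℝ) (hX : X ∈ Mset n I (-1) 0) (hY : Y ∈ Mset n I (-1) 0) :
    ∃ A : Matrix (Fin (n + 2)) (Fin (n + 2)) ℝ, IsPoincareMat n I A ∧ A.mulVec X = Y := by
  obtain ⟨hXX, hIX, -⟩ := hX
  obtain ⟨hYY, hIY, -⟩ := hY
  have hXI := hIX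
  have hYI := hIY
  rw [fs_comm] at hXI hYI
  have comp : ∀ v w : Fin (n + 2) → ℝ, formSig 2 (n + 2) v v ≠ 0 → formSig 2 (n + 2) w w ≠ 0 →
      formSig 2 (n + 2) v I = 0 → formSig 2 (n + 2) w I = 0 →
      (∀ B C : Matrix (Fin (n + 2)) (Fin (n + 2)) ℝ,
        (∀ x, B.mulVec x = x - (2 * formSig 2 (n + 2) v x / formSig 2 (n + 2) v v) • v) →
        (∀ x, C.mulVec x = x - (2 * formSig 2 (n + 2) w x / formSig 2 (n + 2) w w) • w) →
        C.mulVec (B.mulVec X) = Y) →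
      ∃ A : Matrix (Fin (n + 2)) (Fin (n + 2)) ℝ, IsPoincareMat n I A ∧ A.mulVec X = Y := by
    intro v w hv hw hvI hwI h
    obtain ⟨B, hB1, hB2, hB3⟩ := exists_refl _ _ v hv
    obtain ⟨C, hC1, hC2, hC3⟩ := exists_refl _ _ w hw
    refine ⟨C * B, ⟨?_, ?_, ?_⟩, ?_⟩
    · rw [Matrix.det_mul, hB1, hC1]; norm_num
    · intro x y
      rw [← Matrix.mulVec_mulVec, ← Matrix.mulVec_mulVec, hC3, hB3]
    · rw [← Matrix.mulVec_mulVec, hB2, hvI]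
      simp [hC2, hwI]
    · rw [← Matrix.mulVec_mulVec]; exact h B C hB2 hC2
  by_cases hp : formSig 2 (n + 2) (X + Y) (X + Y) = 0
  · obtain ⟨w, hIw, hYw, hww⟩ := exists_orth n hn I Y hI hII hYY hIY
    have hXY : formSig 2 (n + 2) X Y = 1 := by
      simp only [fs_add_left, fs_add_right] at hp
      rw [fs_comm 2 (n + 2) Y X] at hp
      linarith
    have hm : formSig 2 (n + 2) (X - Y) (X - Y) = -4 := by
      simp only [fs_sub_left, fs_sub_right]
      rw [fs_comm 2 (n + 2) Y X, hXX, hYY, hXY]; norm_num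
    have hmX : formSig 2 (n + 2) (X - Y) X = -2 := by
      simp only [fs_sub_left]
      rw [fs_comm 2 (n + 2) Y X, hXX, hXY]; norm_num
    refine comp (X - Y) w (by rw [hm]; norm_num) hww (by simp [fs_sub_left, hXI, hYI])
      (by rw [fs_comm, hIw]) fun B C hB hC => ?_
    have : B.mulVec X = Y := by
      rw [hB, hm, hmX]; norm_num
    rw [this, hC, fs_comm 2 (n + 2) w Y, hYw]; simp
  · refine comp (X + Y) Y hp (by rw [hYY]; norm_num) (by simp [fs_add_left, hXI, hYI]) hYI
      fun B C hB hC => ?_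
    have hc : 2 * formSig 2 (n + 2) (X + Y) X / formSig 2 (n + 2) (X + Y) (X + Y) = 1 := by
      rw [div_eq_one_iff_eq hp]
      simp only [fs_add_left, fs_add_right]
      rw [fs_comm 2 (n + 2) Y X]
      linarith
    have : B.mulVec X = (-1 : ℝ) • Y := by
      rw [hB, hc]; ext i; simp
    rw [this, hC, fs_smul_right, hYY]
    ext i; simp; ring
end

section
/- Assume n ≥ 3. For any X ∈ M_{−1,0}, the stabilizer {A ∈ G : A X = X} of X in G is isomorphic as a group to the semidirect product of the additive group ℝ^{n−1} by K = {B ∈ GL(n−1,ℝ) : B preserves the standard Euclidean inner product on ℝ^{n−1}, det B = 1}, where K acts on ℝ^{n−1} by the standard linear action. (This realizes the flat-model orbit Ti^n = M_{−1,0} as the homogeneous space ISO(1,n−1)/(ℝ^{n−1} ⋊ SO(n−1)).) -/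
/-- The group of linear automorphisms of `ℝ^m` with determinant `1` preserving the
bilinear form `formSig k m` (of signature `(k, m-k)`), realized as a subgroup of the
group of invertible `m × m` real matrices. -/
def specialIsometry (k m : ℕ) : Subgroup (Matrix (Fin m) (Fin m) ℝ)ˣ where
  carrier := {A | ((A : Matrix (Fin m) (Fin m) ℝ)).det = 1 ∧
    ∀ x y : Fin m → ℝ,
      formSig k m ((A : Matrix (Fin m) (Fin m) ℝ).mulVec x)
        ((A : Matrix (Fin m) (Fin m) ℝ).mulVec y) = formSig k m x y}
  one_mem' := by
    refine ⟨by simp, fun x y => by simp⟩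
  mul_mem' := by
    intro a b ha hb
    obtain ⟨had, haf⟩ := ha
    obtain ⟨hbd, hbf⟩ := hb
    refine ⟨by rw [Units.val_mul, Matrix.det_mul, had, hbd, mul_one], fun x y => ?_⟩
    rw [Units.val_mul, ← Matrix.mulVec_mulVec, ← Matrix.mulVec_mulVec, haf, hbf]
  inv_mem' := by
    intro a ha
    obtain ⟨had, haf⟩ := ha
    have hinv : (↑a⁻¹ : Matrix (Fin m) (Fin m) ℝ) * (↑a : Matrix (Fin m) (Fin m) ℝ) = 1 := a.inv_mul
    refine ⟨?_, fun x y => ?_⟩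
    · have h := congrArg Matrix.det hinv
      rw [Matrix.det_mul, had, mul_one, Matrix.det_one] at h
      exact h
    · have hx : ∀ v : Fin m → ℝ,
          (↑a : Matrix (Fin m) (Fin m) ℝ).mulVec
            ((↑a⁻¹ : Matrix (Fin m) (Fin m) ℝ).mulVec v) = v := by
        intro v
        rw [Matrix.mulVec_mulVec, a.mul_inv, Matrix.one_mulVec]
      calc formSig k m ((↑a⁻¹ : Matrix (Fin m) (Fin m) ℝ).mulVec x)
              ((↑a⁻¹ : Matrix (Fin m) (Fin m) ℝ).mulVec y)
          = formSig k m
              ((↑a : Matrix (Fin m) (Fin m) ℝ).mulVec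
                ((↑a⁻¹ : Matrix (Fin m) (Fin m) ℝ).mulVec x))
              ((↑a : Matrix (Fin m) (Fin m) ℝ).mulVec
                ((↑a⁻¹ : Matrix (Fin m) (Fin m) ℝ).mulVec y)) := (haf _ _).symm
        _ = formSig k m x y := by rw [hx, hx]

/-- The subgroup of invertible `m × m` real matrices fixing a given vector `v`. -/
def vecStab (m : ℕ) (v : Fin m → ℝ) : Subgroup (Matrix (Fin m) (Fin m) ℝ)ˣ where
  carrier := {A | (A : Matrix (Fin m) (Fin m) ℝ).mulVec v = v}
  one_mem' := by simp
  mul_mem' := by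
    intro a b ha hb
    show ((a * b : (Matrix (Fin m) (Fin m) ℝ)ˣ) : Matrix (Fin m) (Fin m) ℝ).mulVec v = v
    rw [Units.val_mul, ← Matrix.mulVec_mulVec, hb, ha]
  inv_mem' := by
    intro a ha
    show ((a⁻¹ : (Matrix (Fin m) (Fin m) ℝ)ˣ) : Matrix (Fin m) (Fin m) ℝ).mulVec v = v
    conv_lhs => rw [← ha]
    rw [Matrix.mulVec_mulVec, a.inv_mul, Matrix.one_mulVec]

/-- The 'Poincaré subgroup' of `SL(n+2,ℝ)` determined by the signature `(2,n)` form
`formSig 2 (n+2)` and the null vector `I`. -/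
def poincareGroup (n : ℕ) (I : Fin (n + 2) → ℝ) :
    Subgroup (Matrix (Fin (n + 2)) (Fin (n + 2)) ℝ)ˣ :=
  specialIsometry 2 (n + 2) ⊓ vecStab (n + 2) I

/-- The multiplicative automorphism of `Multiplicative ℝ^m` induced by an invertible
matrix acting by matrix–vector multiplication. -/
def mulVecMulAut {m : ℕ} (A : (Matrix (Fin m) (Fin m) ℝ)ˣ) :
    Multiplicative (Fin m → ℝ) ≃* Multiplicative (Fin m → ℝ) where
  toFun v := Multiplicative.ofAdd
    ((A : Matrix (Fin m) (Fin m) ℝ).mulVec (Multiplicative.toAdd v))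
  invFun v := Multiplicative.ofAdd
    ((↑A⁻¹ : Matrix (Fin m) (Fin m) ℝ).mulVec (Multiplicative.toAdd v))
  left_inv v := by
    simp only [toAdd_ofAdd, Matrix.mulVec_mulVec, Units.inv_mul, Matrix.one_mulVec,
      ofAdd_toAdd]
  right_inv v := by
    simp only [toAdd_ofAdd, Matrix.mulVec_mulVec, Units.mul_inv, Matrix.one_mulVec,
      ofAdd_toAdd]
  map_mul' u v := by
    simp only [toAdd_mul, Matrix.mulVec_add, ofAdd_add]

/-- A subgroup of invertible `m × m` real matrices acts on the (additive, written
multiplicatively) translation group `ℝ^m` by matrix–vector multiplication. -/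
def subgroupMulVecHom {m : ℕ} (S : Subgroup (Matrix (Fin m) (Fin m) ℝ)ˣ) :
    S →* MulAut (Multiplicative (Fin m → ℝ)) where
  toFun A := mulVecMulAut (A : (Matrix (Fin m) (Fin m) ℝ)ˣ)
  map_one' := by
    ext v
    simp [mulVecMulAut]
  map_mul' a b := by
    ext v
    simp [mulVecMulAut, MulAut.mul_apply, Matrix.mulVec_mulVec]

lemma formSig_zero (m : ℕ) (x y : Fin m → ℝ) : formSig 0 m x y = x ⬝ᵥ y := by
  simp [formSig, dotProduct]

/-- The form as a bilinear map. -/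
noncomputable def formBil (k m : ℕ) : LinearMap.BilinForm ℝ (Fin m → ℝ) :=
  LinearMap.mk₂ ℝ (formSig k m)
    (by
      intro a b c
      simp only [formSig, ← Finset.sum_add_distrib]
      refine Finset.sum_congr rfl fun i _ => ?_
      simp only [Pi.add_apply]
      split_ifs <;> ring)
    (by
      intro r a b
      simp only [formSig, smul_eq_mul, Finset.mul_sum]
      refine Finset.sum_congr rfl fun i _ => ?_
      simp only [Pi.smul_apply, smul_eq_mul]
      split_ifs <;> ring)
    (by
      intro a b c
      simp only [formSig, ← Finset.sum_add_distrib]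
      refine Finset.sum_congr rfl fun i _ => ?_
      simp only [Pi.add_apply]
      split_ifs <;> ring)
    (by
      intro r a b
      simp only [formSig, smul_eq_mul, Finset.mul_sum]
      refine Finset.sum_congr rfl fun i _ => ?_
      simp only [Pi.smul_apply, smul_eq_mul]
      split_ifs <;> ring)

lemma formBil_apply (k m : ℕ) (x y : Fin m → ℝ) : formBil k m x y = formSig k m x y := rfl

lemma formBil_comm (k m : ℕ) (x y : Fin m → ℝ) : formBil k m x y = formBil k m y x := by
  simp only [formBil_apply, formSig, mul_comm]

lemma formBil_pos_of_zero (n : ℕ) (w : Fin (n + 2) → ℝ) (h0 : w 0 = 0) (h1 : w 1 = 0)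
    (h : formBil 2 (n + 2) w w ≤ 0) : w = 0 := by
  have e : formBil 2 (n + 2) w w = ∑ i, w i * w i := by
    rw [formBil_apply, formSig]
    refine Finset.sum_congr rfl fun i _ => ?_
    split_ifs with hi
    · have : i = 0 ∨ i = 1 := by
        rcases (by omega : (i : ℕ) = 0 ∨ (i : ℕ) = 1) with h | h
        · exact Or.inl (Fin.ext h)
        · exact Or.inr (Fin.ext h)
      rcases this with rfl | rfl
      · simp [h0]
      · simp [h1]
    · rfl
  rw [e] at h
  have h2 := (Finset.sum_eq_zero_iff_of_nonneg (fun i _ => mul_self_nonneg (w i))).mp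
    (le_antisymm h (Finset.sum_nonneg fun i _ => mul_self_nonneg (w i)))
  ext i
  simpa using h2 i (Finset.mem_univ i)

lemma exists_J (n : ℕ) (I : Fin (n + 2) → ℝ) (hI : I ≠ 0)
    (hII : formBil 2 (n + 2) I I = 0)
    (X : Fin (n + 2) → ℝ) (hXX : formBil 2 (n + 2) X X = -1) (hIX : formBil 2 (n + 2) I X = 0) :
    ∃ J, formBil 2 (n + 2) J J = 0 ∧ formBil 2 (n + 2) I J = 1 ∧ formBil 2 (n + 2) X J = 0 := by
  set Φ := formBil 2 (n + 2) with hΦ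
  have hXI : Φ X I = 0 := by rw [hΦ, formBil_comm]; exact hIX
  obtain ⟨y, hy⟩ : ∃ y, Φ I y ≠ 0 := by
    refine ⟨fun i => if (i : ℕ) < 2 then - I i else I i, ?_⟩
    have e : Φ I (fun i => if (i : ℕ) < 2 then - I i else I i) = ∑ i, I i * I i := by
      rw [hΦ, formBil_apply, formSig]
      refine Finset.sum_congr rfl fun i _ => ?_
      split_ifs <;> ring
    rw [e]
    intro h
    have h2 := (Finset.sum_eq_zero_iff_of_nonneg (fun i _ => mul_self_nonneg (I i))).mp h
    apply hI
    ext i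
    simpa using h2 i (Finset.mem_univ i)
  obtain ⟨z, hz1, hz2⟩ : ∃ z, Φ I z = 1 ∧ Φ X z = 0 := by
    refine ⟨(Φ I y)⁻¹ • (y + Φ X y • X), ?_, ?_⟩
    · simp [hIX, hy]
    · simp [hXX]
  have hzI : Φ z I = 1 := by rw [hΦ, formBil_comm]; exact hz1
  refine ⟨z - (Φ z z / 2) • I, ?_, ?_, ?_⟩
  · simp [hz1, hzI, hII]
    ring
  · simp [hz1, hII]
  · simp [hz2, hXI]

lemma posdef_perp (n : ℕ) (I X J u : Fin (n + 2) → ℝ)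
    (hII : formBil 2 (n + 2) I I = 0)
    (hXX : formBil 2 (n + 2) X X = -1) (hXI : formBil 2 (n + 2) X I = 0)
    (hJJ : formBil 2 (n + 2) J J = 0) (hIJ : formBil 2 (n + 2) I J = 1)
    (hXJ : formBil 2 (n + 2) X J = 0)
    (hXu : formBil 2 (n + 2) X u = 0) (hIu : formBil 2 (n + 2) I u = 0)
    (hJu : formBil 2 (n + 2) J u = 0) (hu : formBil 2 (n + 2) u u ≤ 0) : u = 0 := by
  have hc := formBil_comm 2 (n + 2)
  set Φ := formBil 2 (n + 2) with hΦ
  have hIX : Φ I X = 0 := by rw [hc]; exact hXI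
  have hJI : Φ J I = 1 := by rw [hc]; exact hIJ
  have hJX : Φ J X = 0 := by rw [hc]; exact hXJ
  have huX : Φ u X = 0 := by rw [hc]; exact hXu
  have huI : Φ u I = 0 := by rw [hc]; exact hIu
  have huJ : Φ u J = 0 := by rw [hc]; exact hJu
  let c : Fin 3 → (Fin (n + 2) → ℝ) := ![X, I - J, u]
  let L : (Fin 3 → ℝ) →ₗ[ℝ] (Fin (n + 2) → ℝ) := Fintype.linearCombination ℝ c
  let F : (Fin 3 → ℝ) →ₗ[ℝ] ℝ × ℝ :=
    ((LinearMap.proj 0).prod (LinearMap.proj 1)).comp L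
  have hF : LinearMap.ker F ≠ ⊥ := F.ker_ne_bot_of_finrank_lt (by simp)
  obtain ⟨a, ha, ha0⟩ := Submodule.exists_mem_ne_zero_of_ne_bot hF
  have hLa : L a = a 0 • X + a 1 • (I - J) + a 2 • u := by
    simp [L, c, Fintype.linearCombination_apply, Fin.sum_univ_three]
  have hFa : F a = 0 := ha
  have h0 : (L a) 0 = 0 := congrArg Prod.fst hFa
  have h1 : (L a) 1 = 0 := congrArg Prod.snd hFa
  have hform : Φ (L a) (L a) = - a 0 ^ 2 - 2 * a 1 ^ 2 + a 2 ^ 2 * Φ u u := by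
    rw [hLa]
    simp [hII, hXX, hXI, hJJ, hIJ, hXJ, hXu, hIu, hJu, hIX, hJI, hJX, huX, huI, huJ]
    ring
  have hz : L a = 0 := by
    apply formBil_pos_of_zero n _ h0 h1
    rw [← hΦ, hform]
    nlinarith [sq_nonneg (a 0), sq_nonneg (a 1), sq_nonneg (a 2)]
  have e0 : Φ X (L a) = - a 0 := by
    rw [hLa]; simp [hXX, hXI, hXJ, hXu]
  have e1 : Φ I (L a) = - a 1 := by
    rw [hLa]; simp [hII, hIX, hIJ, hIu]
  rw [hz, map_zero] at e0 e1
  have a0 : a 0 = 0 := by linarith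
  have a1 : a 1 = 0 := by linarith
  have hu2 : a 2 • u = 0 := by
    rw [hLa, a0, a1] at hz
    simpa using hz
  rcases smul_eq_zero.mp hu2 with h | h
  · exfalso
    apply ha0
    ext i
    fin_cases i <;> simp [a0, a1, h]
  · exact h

/-- Model space. -/
abbrev NN (m : ℕ) : Type := ℝ × ℝ × (Fin m → ℝ) × ℝ

/-- The model quadratic form. -/
def qN {m : ℕ} (a b : NN m) : ℝ :=
  - (a.1 * b.1) + a.2.1 * b.2.2.2 + a.2.2.2 * b.2.1 + a.2.2.1 ⬝ᵥ b.2.2.1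

lemma exists_ON (n m : ℕ) (hm : m + 1 = n) (I X J : Fin (n + 2) → ℝ)
    (hII : formBil 2 (n + 2) I I = 0)
    (hXX : formBil 2 (n + 2) X X = -1) (hXI : formBil 2 (n + 2) X I = 0)
    (hJJ : formBil 2 (n + 2) J J = 0) (hIJ : formBil 2 (n + 2) I J = 1)
    (hXJ : formBil 2 (n + 2) X J = 0) :
    ∃ e : Fin m → (Fin (n + 2) → ℝ), (∀ i j, formBil 2 (n + 2) (e i) (e j) =
      if i = j then 1 else 0) ∧ ∀ i, formBil 2 (n + 2) X (e i) = 0 ∧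
      formBil 2 (n + 2) I (e i) = 0 ∧ formBil 2 (n + 2) J (e i) = 0 := by
  have hc := formBil_comm 2 (n + 2)
  have hpos := fun u => posdef_perp n I X J u hII hXX hXI hJJ hIJ hXJ
  set Φ := formBil 2 (n + 2) with hΦ
  have hIX : Φ I X = 0 := by rw [hc]; exact hXI
  have hJI : Φ J I = 1 := by rw [hc]; exact hIJ
  have hJX : Φ J X = 0 := by rw [hc]; exact hXJ
  let F : (Fin (n + 2) → ℝ) →ₗ[ℝ] ℝ × ℝ × ℝ := (Φ X).prod ((Φ I).prod (Φ J))
  have hsurj : Function.Surjective F := by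
    rintro ⟨a, b, c⟩
    refine ⟨(-a) • X + c • I + b • J, ?_⟩
    simp [F, hXX, hXI, hXJ, hII, hIX, hIJ, hJX, hJI, hJJ]
  have hrank : Module.finrank ℝ (LinearMap.ker F) = m := by
    have h := LinearMap.finrank_range_add_finrank_ker F
    rw [LinearMap.range_eq_top.mpr hsurj] at h
    simp at h
    omega
  have hE : ∀ u ∈ LinearMap.ker F, Φ X u = 0 ∧ Φ I u = 0 ∧ Φ J u = 0 := by
    intro u hu
    have h : F u = 0 := hu
    exact ⟨congrArg Prod.fst h, congrArg (fun p => p.2.1) h, congrArg (fun p => p.2.2) h⟩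
  obtain ⟨v, hv⟩ := LinearMap.BilinForm.exists_orthogonal_basis
    (B := Φ.restrict (LinearMap.ker F)) ⟨fun x y => hc _ _⟩
  have hwE : ∀ i : Fin m, ((v (Fin.cast hrank.symm i) : LinearMap.ker F) :
      Fin (n + 2) → ℝ) ∈ LinearMap.ker F := fun i => Subtype.property _
  have hw0 : ∀ i : Fin m, ((v (Fin.cast hrank.symm i) : LinearMap.ker F) :
      Fin (n + 2) → ℝ) ≠ 0 := fun i h => v.ne_zero _ (Subtype.ext h)
  have hwo : ∀ i j : Fin m, i ≠ j → Φ (v (Fin.cast hrank.symm i) : LinearMap.ker F)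
      (v (Fin.cast hrank.symm j) : LinearMap.ker F) = 0 := fun i j hij =>
    hv (fun h => hij (Fin.cast_injective _ h))
  generalize hw : (fun i : Fin m => ((v (Fin.cast hrank.symm i) : LinearMap.ker F) :
      Fin (n + 2) → ℝ)) = w at *
  have hw' : ∀ i, ((v (Fin.cast hrank.symm i) : LinearMap.ker F) :
      Fin (n + 2) → ℝ) = w i := fun i => congrFun hw i
  simp only [hw'] at hwE hw0 hwo
  have hwp : ∀ i, 0 < Φ (w i) (w i) := by
    intro i
    by_contra h
    obtain ⟨h1, h2, h3⟩ := hE _ (hwE i)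
    exact hw0 i (hpos _ h1 h2 h3 (not_lt.mp h))
  refine ⟨fun i => (√(Φ (w i) (w i)))⁻¹ • w i, ?_, ?_⟩
  · intro i j
    split_ifs with h
    · subst h
      have h1 := (Real.sqrt_pos.mpr (hwp i)).ne'
      have h2 := Real.mul_self_sqrt (hwp i).le
      simp only [map_smul, LinearMap.smul_apply, smul_eq_mul]
      field_simp
      nlinarith
    · simp [hwo i j h]
  · intro i
    obtain ⟨h1, h2, h3⟩ := hE _ (hwE i)
    simp [h1, h2, h3]

lemma exists_model (n m : ℕ) (hm : m + 1 = n) (I : Fin (n + 2) → ℝ) (hI : I ≠ 0)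
    (hII : formBil 2 (n + 2) I I = 0) (X : Fin (n + 2) → ℝ)
    (hXX : formBil 2 (n + 2) X X = -1) (hIX : formBil 2 (n + 2) I X = 0) :
    ∃ ψ : NN m ≃ₗ[ℝ] (Fin (n + 2) → ℝ),
      (∀ a b, formSig 2 (n + 2) (ψ a) (ψ b) = qN a b) ∧
      ψ (1, 0, 0, 0) = X ∧ ψ (0, 1, 0, 0) = I := by
  obtain ⟨J, hJJ, hIJ, hXJ⟩ := exists_J n I hI hII X hXX hIX
  have hc := formBil_comm 2 (n + 2)
  have hXI : formBil 2 (n + 2) X I = 0 := by rw [hc]; exact hIX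
  obtain ⟨e, he, he'⟩ := exists_ON n m hm I X J hII hXX hXI hJJ hIJ hXJ
  simp only [← formBil_apply]
  set Φ := formBil 2 (n + 2) with hΦ
  have hJI : Φ J I = 1 := by rw [hc]; exact hIJ
  have hJX : Φ J X = 0 := by rw [hc]; exact hXJ
  have hXe := fun i => (he' i).1
  have hIe := fun i => (he' i).2.1
  have hJe := fun i => (he' i).2.2
  have heX : ∀ i, Φ (e i) X = 0 := fun i => by rw [hc]; exact hXe i
  have heI : ∀ i, Φ (e i) I = 0 := fun i => by rw [hc]; exact hIe i
  have heJ : ∀ i, Φ (e i) J = 0 := fun i => by rw [hc]; exact hJe i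
  let L : NN m →ₗ[ℝ] (Fin (n + 2) → ℝ) :=
    (LinearMap.toSpanSingleton ℝ _ X).coprod
      ((LinearMap.toSpanSingleton ℝ _ I).coprod
        ((Fintype.linearCombination ℝ e).coprod (LinearMap.toSpanSingleton ℝ _ J)))
  have hL : ∀ a : NN m, L a = a.1 • X + (a.2.1 • I + ((∑ i, a.2.2.1 i • e i) + a.2.2.2 • J)) := by
    intro a
    simp [L, Fintype.linearCombination_apply]
  have hform : ∀ a b, Φ (L a) (L b) = qN a b := by
    intro a b
    rw [hL, hL]
    simp [hII, hXX, hXI, hJJ, hIJ, hXJ, hIX, hJI, hJX, hXe, hIe, hJe, heX, heI, heJ, he,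
      qN, dotProduct]
    ring
  have hinj : Function.Injective L := by
    rw [← LinearMap.ker_eq_bot, LinearMap.ker_eq_bot']
    intro a ha
    have h : ∀ b, qN a b = 0 := fun b => by rw [← hform, ha]; simp
    have h1 := h (1, 0, 0, 0)
    have h2 := h (0, 1, 0, 0)
    have h3 := h (0, 0, 0, 1)
    have h4 := fun i => h (0, 0, Pi.single i 1, 0)
    simp [qN] at h1 h2 h3 h4
    refine Prod.ext h1 (Prod.ext h3 (Prod.ext (funext h4) h2))
  have hsurj : Function.Surjective L :=
    (LinearMap.injective_iff_surjective_of_finrank_eq_finrank (by simp; omega)).mp hinj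
  refine ⟨LinearEquiv.ofBijective L ⟨hinj, hsurj⟩, ?_, ?_, ?_⟩
  · intro a b
    exact hform a b
  · refine (hL _).trans ?_
    simp
  · refine (hL _).trans ?_
    simp

/-- The model transformation attached to `(v, B)`. -/
noncomputable def TT {m : ℕ} (v : Fin m → ℝ) (B : Matrix (Fin m) (Fin m) ℝ) :
    NN m →ₗ[ℝ] NN m where
  toFun a := (a.1, a.2.1 - v ⬝ᵥ B.mulVec a.2.2.1 - (v ⬝ᵥ v) / 2 * a.2.2.2,
    B.mulVec a.2.2.1 + a.2.2.2 • v, a.2.2.2)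
  map_add' a b := by
    simp only [Prod.fst_add, Prod.snd_add, Matrix.mulVec_add, dotProduct_add, add_smul,
      Prod.mk_add_mk, Prod.mk.injEq, true_and, and_true]
    refine ⟨by ring, by abel⟩
  map_smul' r a := by
    simp only [Prod.smul_fst, Prod.smul_snd, Matrix.mulVec_smul, dotProduct_smul,
      Prod.smul_mk, Prod.mk.injEq, true_and, and_true, smul_eq_mul, RingHom.id_apply, smul_add,
      mul_smul]
    ring

lemma TT_apply {m : ℕ} (v : Fin m → ℝ) (B : Matrix (Fin m) (Fin m) ℝ) (a : NN m) :
    TT v B a = (a.1, a.2.1 - v ⬝ᵥ B.mulVec a.2.2.1 - (v ⬝ᵥ v) / 2 * a.2.2.2,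
    B.mulVec a.2.2.1 + a.2.2.2 • v, a.2.2.2) := rfl

lemma TT_mul {m : ℕ} (v w : Fin m → ℝ) (B C : Matrix (Fin m) (Fin m) ℝ)
    (hB : ∀ x y, B.mulVec x ⬝ᵥ B.mulVec y = x ⬝ᵥ y) :
    TT v B * TT w C = TT (v + B.mulVec w) (B * C) := by
  refine LinearMap.ext fun a => ?_
  simp only [Module.End.mul_apply, TT_apply, Matrix.mulVec_add, Matrix.mulVec_smul,
    dotProduct_add, add_dotProduct, dotProduct_smul, smul_add, ← Matrix.mulVec_mulVec, hB,
    Prod.mk.injEq, true_and, and_true, smul_eq_mul]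
  rw [dotProduct_comm (B.mulVec w) v]
  refine ⟨by ring, by abel⟩

lemma TT_one {m : ℕ} : TT (0 : Fin m → ℝ) 1 = 1 := by
  refine LinearMap.ext fun a => ?_
  simp [TT_apply]

lemma TT_q {m : ℕ} (v : Fin m → ℝ) (B : Matrix (Fin m) (Fin m) ℝ)
    (hB : ∀ x y, B.mulVec x ⬝ᵥ B.mulVec y = x ⬝ᵥ y) (a b : NN m) :
    qN (TT v B a) (TT v B b) = qN a b := by
  simp only [TT_apply, qN, dotProduct_add, add_dotProduct, dotProduct_smul, smul_dotProduct, hB,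
    smul_eq_mul]
  rw [dotProduct_comm (B.mulVec a.2.2.1) v]
  ring

lemma det_TT_zero {m : ℕ} (B : Matrix (Fin m) (Fin m) ℝ) :
    LinearMap.det (TT 0 B) = B.det := by
  have : TT 0 B = LinearMap.prodMap (LinearMap.id : ℝ →ₗ[ℝ] ℝ)
      (LinearMap.prodMap (LinearMap.id : ℝ →ₗ[ℝ] ℝ)
        (LinearMap.prodMap (Matrix.toLin' B) (LinearMap.id : ℝ →ₗ[ℝ] ℝ))) := by
    refine LinearMap.ext fun a => ?_
    simp [TT_apply, LinearMap.prodMap_apply]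
  rw [this, LinearMap.det_prodMap, LinearMap.det_prodMap, LinearMap.det_prodMap]
  simp

lemma det_TT_one {m : ℕ} (v : Fin m → ℝ) : LinearMap.det (TT v 1) = 1 := by
  have h1 : ∀ x y : Fin m → ℝ, (1 : Matrix (Fin m) (Fin m) ℝ).mulVec x ⬝ᵥ
      (1 : Matrix (Fin m) (Fin m) ℝ).mulVec y = x ⬝ᵥ y := by simp
  have hn1 : ∀ x y : Fin m → ℝ, (-1 : Matrix (Fin m) (Fin m) ℝ).mulVec x ⬝ᵥ
      (-1 : Matrix (Fin m) (Fin m) ℝ).mulVec y = x ⬝ᵥ y := by simp [Matrix.neg_mulVec]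
  have e1 : TT ((1 / 2 : ℝ) • v) 1 * TT ((1 / 2 : ℝ) • v) 1 = TT v 1 := by
    rw [TT_mul _ _ _ _ h1, Matrix.one_mulVec, ← add_smul, one_mul]
    norm_num
  have e2 : TT v 1 * TT (-v) 1 = 1 := by
    rw [TT_mul _ _ _ _ h1]
    simp [TT_one]
  have e3 : TT 0 (-1) * TT v 1 = TT (-v) 1 * TT 0 (-1) := by
    rw [TT_mul _ _ _ _ h1, TT_mul _ _ _ _ hn1]
    simp [Matrix.neg_mulVec]
  have e4 : TT (0 : Fin m → ℝ) (-1) * TT 0 (-1) = 1 := by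
    rw [TT_mul _ _ _ _ hn1]
    simp [TT_one]
  replace e1 := congrArg LinearMap.det e1
  replace e2 := congrArg LinearMap.det e2
  replace e3 := congrArg LinearMap.det e3
  replace e4 := congrArg LinearMap.det e4
  rw [map_mul] at e1 e2 e4
  rw [map_mul, map_mul] at e3
  rw [map_one] at e2 e4
  have e5 : LinearMap.det (TT v 1) = LinearMap.det (TT (-v) 1) := by
    have h0 : LinearMap.det (TT (0 : Fin m → ℝ) (-1)) ≠ 0 := fun h => by simp [h] at e4
    exact mul_left_cancel₀ h0 (e3.trans (mul_comm _ _))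
  rw [← e5] at e2
  have e6 : 0 ≤ LinearMap.det (TT v 1) := by rw [← e1]; exact mul_self_nonneg _
  nlinarith

lemma det_TT {m : ℕ} (v : Fin m → ℝ) (B : Matrix (Fin m) (Fin m) ℝ) :
    LinearMap.det (TT v B) = B.det := by
  have h := TT_mul v 0 1 B (by simp)
  simp only [Matrix.mulVec_zero, add_zero, one_mul] at h
  rw [← h, map_mul, det_TT_one, det_TT_zero, one_mul]

/-- Any isometry of the model fixing the first two basis vectors is one of the `TT`. -/
lemma exists_TT {m : ℕ} (S : NN m →ₗ[ℝ] NN m) (hS : ∀ a b, qN (S a) (S b) = qN a b)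
    (hX : S (1, 0, 0, 0) = (1, 0, 0, 0)) (hI : S (0, 1, 0, 0) = (0, 1, 0, 0)) :
    ∃ v B, (∀ x y, Matrix.mulVec B x ⬝ᵥ Matrix.mulVec B y = x ⬝ᵥ y) ∧ S = TT v B := by
  let f : (Fin m → ℝ) →ₗ[ℝ] NN m :=
    LinearMap.inr ℝ ℝ _ ∘ₗ LinearMap.inr ℝ ℝ _ ∘ₗ LinearMap.inl ℝ _ ℝ
  let g : NN m →ₗ[ℝ] (Fin m → ℝ) :=
    LinearMap.fst ℝ _ ℝ ∘ₗ LinearMap.snd ℝ ℝ _ ∘ₗ LinearMap.snd ℝ ℝ _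
  let B := LinearMap.toMatrix' (g ∘ₗ S ∘ₗ f)
  have hB : ∀ u, B.mulVec u = (S (0, 0, u, 0)).2.2.1 := by
    intro u
    rw [LinearMap.toMatrix'_mulVec]
    rfl
  have h1 : ∀ a, (S a).1 = a.1 := by
    intro a
    have := hS a (1, 0, 0, 0)
    rw [hX] at this
    simpa [qN] using this
  have h2 : ∀ a, (S a).2.2.2 = a.2.2.2 := by
    intro a
    have := hS a (0, 1, 0, 0)
    rw [hI] at this
    simpa [qN] using this
  have hJ := hS (0, 0, 0, 1) (0, 0, 0, 1)
  have hJu := fun u => hS (0, 0, 0, 1) (0, 0, u, 0)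
  refine ⟨(S (0, 0, 0, 1)).2.2.1, B, ?_, ?_⟩
  · intro x y
    have := hS (0, 0, x, 0) (0, 0, y, 0)
    rw [hB, hB]
    simpa [qN, h1, h2] using this
  · simp [qN, h1, h2] at hJ hJu
    refine LinearMap.ext fun a => ?_
    have ha : a = a.1 • ((1, 0, 0, 0) : NN m) + a.2.1 • ((0, 1, 0, 0) : NN m) + (0, 0, a.2.2.1, 0)
        + a.2.2.2 • ((0, 0, 0, 1) : NN m) := by
      simp
    refine Prod.ext (h1 a) (Prod.ext ?_ (Prod.ext ?_ (h2 a)))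
    · conv_lhs => rw [ha]
      simp only [map_add, map_smul, hX, hI, TT_apply, hB, Prod.fst_add, Prod.snd_add,
        Prod.smul_fst, Prod.smul_snd, smul_eq_mul]
      linear_combination hJu a.2.2.1 + a.2.2.2 / 2 * hJ
    · conv_lhs => rw [ha]
      simp only [map_add, map_smul, hX, hI, TT_apply, hB, Prod.fst_add, Prod.snd_add,
        Prod.smul_fst, Prod.smul_snd, smul_zero, zero_add]

lemma specialIsometry_dot {m : ℕ} (B : specialIsometry 0 m) (x y : Fin m → ℝ) :
    Matrix.mulVec (B.1 : Matrix (Fin m) (Fin m) ℝ) x ⬝ᵥ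
      Matrix.mulVec (B.1 : Matrix (Fin m) (Fin m) ℝ) y = x ⬝ᵥ y := by
  have := B.2.2 x y
  simpa only [formSig_zero] using this

/-- The model representation of the semidirect product. -/
noncomputable def TTHom (m : ℕ) :
    SemidirectProduct (Multiplicative (Fin m → ℝ)) (↥(specialIsometry 0 m))
        (subgroupMulVecHom (specialIsometry 0 m)) →* Module.End ℝ (NN m) where
  toFun p := TT (Multiplicative.toAdd p.left) (p.right.1 : Matrix (Fin m) (Fin m) ℝ)
  map_one' := by simp [TT_one]
  map_mul' p q := by
    rw [TT_mul _ _ _ _ (specialIsometry_dot p.right)]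
    rfl

theorem stab_iso_aux (n m : ℕ) (I X : Fin (n + 2) → ℝ) (ψ : NN m ≃ₗ[ℝ] (Fin (n + 2) → ℝ))
    (hψ : ∀ a b, formSig 2 (n + 2) (ψ a) (ψ b) = qN a b)
    (hψX : ψ (1, 0, 0, 0) = X) (hψI : ψ (0, 1, 0, 0) = I) :
    Nonempty ((↥(poincareGroup n I ⊓ vecStab (n + 2) X)) ≃*
      SemidirectProduct (Multiplicative (Fin m → ℝ))
        (↥(specialIsometry 0 m))
        (subgroupMulVecHom (specialIsometry 0 m))) := by
  let c : Module.End ℝ (NN m) →* Matrix (Fin (n + 2)) (Fin (n + 2)) ℝ :=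
    ((ψ.conjAlgEquiv ℝ).trans LinearMap.toMatrixAlgEquiv' : _ ≃ₐ[ℝ] _)
  have hc : ∀ T a, (c T).mulVec (ψ a) = ψ (T a) := by
    intro T a
    have : c T = LinearMap.toMatrix' (ψ.conj T) := rfl
    rw [this, LinearMap.toMatrix'_mulVec]
    simp [LinearEquiv.conj_apply]
  have hdet : ∀ T, (c T).det = LinearMap.det T := by
    intro T
    have : c T = LinearMap.toMatrix' (ψ.conj T) := rfl
    rw [this, LinearMap.det_toMatrix', LinearEquiv.conj_apply, LinearMap.comp_assoc]
    exact LinearMap.det_conj T ψ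
  have hcinj : Function.Injective c :=
    ((ψ.conjAlgEquiv ℝ).trans LinearMap.toMatrixAlgEquiv' : _ ≃ₐ[ℝ] _).injective
  let g := (c.comp (TTHom m)).toHomUnits
  have hg : ∀ p, ((g p : (Matrix (Fin (n + 2)) (Fin (n + 2)) ℝ)ˣ) :
      Matrix (Fin (n + 2)) (Fin (n + 2)) ℝ) = c (TT (Multiplicative.toAdd p.left)
        (p.right.1 : Matrix (Fin m) (Fin m) ℝ)) := fun p => rfl
  have hmem : ∀ p, g p ∈ poincareGroup n I ⊓ vecStab (n + 2) X := by
    intro p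
    refine ⟨⟨⟨?_, ?_⟩, ?_⟩, ?_⟩
    · rw [hg, hdet, det_TT]
      exact p.right.2.1
    · intro x y
      obtain ⟨a, rfl⟩ := ψ.surjective x
      obtain ⟨b, rfl⟩ := ψ.surjective y
      rw [hg, hc, hc, hψ, hψ, TT_q _ _ (specialIsometry_dot p.right)]
    · change Matrix.mulVec _ _ = _
      rw [hg, ← hψI, hc]
      simp [TT_apply]
    · change Matrix.mulVec _ _ = _
      rw [hg, ← hψX, hc]
      simp [TT_apply]
  refine ⟨(MulEquiv.ofBijective (g.codRestrict _ hmem) ⟨?_, ?_⟩).symm⟩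
  · intro p q hpq
    have h1 : g p = g q := congrArg Subtype.val hpq
    have h2 := congrArg Units.val h1
    rw [hg, hg] at h2
    have h3 := hcinj h2
    refine SemidirectProduct.ext ?_ (Subtype.ext (Units.ext ?_))
    · have := congrArg (fun x : NN m => x.2.2.1) (LinearMap.congr_fun h3 (0, 0, 0, 1))
      simpa [TT_apply] using this
    · apply Matrix.toLin'.injective
      refine LinearMap.ext fun u => ?_
      have := congrArg (fun x : NN m => x.2.2.1) (LinearMap.congr_fun h3 (0, 0, u, 0))
      simpa [TT_apply] using this
  · rintro ⟨A, ⟨⟨hA1, hA2⟩, hA3⟩, hA4⟩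
    change Matrix.mulVec _ _ = _ at hA3 hA4
    let S : NN m →ₗ[ℝ] NN m := ψ.symm.conj (Matrix.toLin' A.1)
    have hSa : ∀ a, ψ (S a) = A.1.mulVec (ψ a) := by
      intro a
      simp [S, LinearEquiv.conj_apply]
    obtain ⟨v, B, hB, hS⟩ := exists_TT S
      (by intro a b; rw [← hψ, hSa, hSa, hA2, hψ])
      (by apply ψ.injective; rw [hSa, hψX, hA4])
      (by apply ψ.injective; rw [hSa, hψI, hA3])
    have hcS : c S = A.1 := by
      apply Matrix.toLin'.injective
      refine LinearMap.ext fun x => ?_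
      obtain ⟨a, rfl⟩ := ψ.surjective x
      rw [Matrix.toLin'_apply, Matrix.toLin'_apply, hc, hSa]
    have hBdet : B.det = 1 := by
      rw [← det_TT v B, ← hS, ← hdet, hcS]
      exact hA1
    let Bu : (Matrix (Fin m) (Fin m) ℝ)ˣ := Matrix.nonsingInvUnit B (by rw [hBdet]; exact isUnit_one)
    have hBu : (Bu : Matrix (Fin m) (Fin m) ℝ) = B := rfl
    refine ⟨⟨Multiplicative.ofAdd v, ⟨Bu, hBdet, ?_⟩⟩, ?_⟩
    · intro x y
      rw [formSig_zero, formSig_zero, hBu, hB]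
    · apply Subtype.ext
      apply Units.ext
      change c (TT v B) = A.1
      rw [← hS, hcS]

/-- For `n ≥ 3` and any `X` in the flat-model orbit `Ti^n = M_{-1,0}`, the stabilizer of
`X` in the Poincaré subgroup `G` is isomorphic, as a group, to the semidirect product
`ℝ^{n-1} ⋊ SO(n-1)`, where `SO(n-1)` is the group of matrices of determinant one
preserving the standard Euclidean inner product `formSig 0 (n-1)` of `ℝ^{n-1}`, acting
by matrix–vector multiplication. -/
theorem stabilizer_of_Ti_point_iso
    (n : ℕ) (hn : 3 ≤ n) (I : Fin (n + 2) → ℝ) (hI : I ≠ 0)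
    (hII : formSig 2 (n + 2) I I = 0)
    (X : Fin (n + 2) → ℝ) (hX : X ∈ Mset n I (-1) 0) :
    Nonempty ((↥(poincareGroup n I ⊓ vecStab (n + 2) X)) ≃*
      SemidirectProduct (Multiplicative (Fin (n - 1) → ℝ))
        (↥(specialIsometry 0 (n - 1)))
        (subgroupMulVecHom (specialIsometry 0 (n - 1)))) := by
  obtain ⟨hXX, hIX, -⟩ := hX
  obtain ⟨ψ, h1, h2, h3⟩ := exists_model n (n - 1) (by omega) I hI hII X hXX hIX
  exact stab_iso_aux n (n - 1) I X ψ h1 h2 h3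
end

section
/- Assume n ≥ 3. For any X ∈ M_{1,0}, the stabilizer {A ∈ G : A X = X} of X in G is isomorphic as a group to the semidirect product of the additive group ℝ^{n−1} by L = {B ∈ GL(n−1,ℝ) : η'(Bu,Bv) = η'(u,v) for all u,v ∈ ℝ^{n−1}, det B = 1}, where η' is the standard Minkowski bilinear form of signature (1,n−2) on ℝ^{n−1} and L acts on ℝ^{n−1} by the standard linear action. (This realizes the flat-model orbit Spi^n = M_{1,0} as the homogeneous space ISO(1,n−1)/(ℝ^{n−1} ⋊ SO(1,n−2)).) -/
/-- `formSig` as a bilinear map. -/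
noncomputable def bf (k m : ℕ) : (Fin m → ℝ) →ₗ[ℝ] (Fin m → ℝ) →ₗ[ℝ] ℝ :=
  LinearMap.mk₂ ℝ (formSig k m)
    (by intro x y z; simp only [formSig, ← Finset.sum_add_distrib]
        refine Finset.sum_congr rfl fun i _ => ?_
        simp only [Pi.add_apply]; split_ifs <;> ring)
    (by intro c x y; simp only [formSig, smul_eq_mul, Finset.mul_sum]
        refine Finset.sum_congr rfl fun i _ => ?_
        simp only [Pi.smul_apply, smul_eq_mul]; split_ifs <;> ring)
    (by intro x y z; simp only [formSig, ← Finset.sum_add_distrib]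
        refine Finset.sum_congr rfl fun i _ => ?_
        simp only [Pi.add_apply]; split_ifs <;> ring)
    (by intro c x y; simp only [formSig, smul_eq_mul, Finset.mul_sum]
        refine Finset.sum_congr rfl fun i _ => ?_
        simp only [Pi.smul_apply, smul_eq_mul]; split_ifs <;> ring)

theorem bf_eq (k m : ℕ) (x y : Fin m → ℝ) : formSig k m x y = bf k m x y := rfl

theorem bf_comm (k m : ℕ) (x y : Fin m → ℝ) : bf k m x y = bf k m y x := by
  simp only [← bf_eq, formSig]
  refine Finset.sum_congr rfl fun i _ => ?_
  rw [mul_comm]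

theorem bf_single (k m : ℕ) (x : Fin m → ℝ) (i : Fin m) (c : ℝ) :
    bf k m x (Pi.single i c) = if (i : ℕ) < k then -(x i * c) else x i * c := by
  simp only [← bf_eq, formSig]
  rw [Finset.sum_eq_single i]
  · simp
  · intro j _ hj; simp [hj]
  · simp

/-- The model space. -/
abbrev ES (m : ℕ) : Type := (Fin m → ℝ) × ℝ × ℝ × ℝ

/-- The model form. -/
noncomputable def qf (m : ℕ) (x y : ES m) : ℝ :=
  bf 1 m x.1 y.1 + x.2.1 * y.2.2.1 + x.2.2.1 * y.2.1 + x.2.2.2 * y.2.2.2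

/-- The general element of the stabilizer in the model. -/
noncomputable def FL (m : ℕ) (w : Fin m → ℝ) (B : Matrix (Fin m) (Fin m) ℝ) : ES m →ₗ[ℝ] ES m where
  toFun x := (B.mulVec x.1 + x.2.2.1 • w,
    x.2.1 - bf 1 m w (B.mulVec x.1) - x.2.2.1 * (bf 1 m w w / 2), x.2.2.1, x.2.2.2)
  map_add' x y := by
    ext
    · simp [Matrix.mulVec_add]; ring
    · simp [Matrix.mulVec_add]; ring
    · simp
    · simp
  map_smul' c x := by
    ext
    · simp [Matrix.mulVec_smul]; ring
    · simp [Matrix.mulVec_smul]; ring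
    · simp
    · simp

theorem FL_comp (m : ℕ) (w w' : Fin m → ℝ) (B B' : Matrix (Fin m) (Fin m) ℝ)
    (hB : ∀ x y, bf 1 m (B.mulVec x) (B.mulVec y) = bf 1 m x y) :
    FL m w B * FL m w' B' = FL m (w + B.mulVec w') (B * B') := by
  refine LinearMap.ext fun x => ?_
  obtain ⟨u, a, b, c⟩ := x
  have h1 := hB w' (B'.mulVec u)
  have h2 := hB w' w'
  have h3 := bf_comm 1 m w (B.mulVec w')
  rw [Matrix.mulVec_mulVec] at h1
  simp only [Module.End.mul_apply, FL, LinearMap.coe_mk, AddHom.coe_mk, Matrix.mulVec_add,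
    Matrix.mulVec_smul, Matrix.mulVec_mulVec, map_add, map_smul, LinearMap.add_apply, smul_eq_mul,
    h1, h2, h3]
  refine Prod.ext ?_ (Prod.ext ?_ rfl)
  · simp only [smul_add]; abel
  · simp only; ring

theorem FL_one (m : ℕ) : FL m 0 1 = 1 := by
  refine LinearMap.ext fun x => ?_
  simp [FL]

theorem FL_zero_det (m : ℕ) (B : Matrix (Fin m) (Fin m) ℝ) : LinearMap.det (FL m 0 B) = B.det := by
  have : FL m 0 B = LinearMap.prodMap (Matrix.toLin' B) LinearMap.id := by
    refine LinearMap.ext fun x => ?_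
    simp [FL]
  rw [this, LinearMap.det_prodMap]
  simp

theorem FL_trans_det (m : ℕ) (w : Fin m → ℝ) : LinearMap.det (FL m w 1) = 1 := by
  have h1 : ∀ x y : Fin m → ℝ, bf 1 m ((1 : Matrix (Fin m) (Fin m) ℝ).mulVec x)
      ((1 : Matrix (Fin m) (Fin m) ℝ).mulVec y) = bf 1 m x y := by simp
  have hm : ∀ x y : Fin m → ℝ, bf 1 m ((-1 : Matrix (Fin m) (Fin m) ℝ).mulVec x)
      ((-1 : Matrix (Fin m) (Fin m) ℝ).mulVec y) = bf 1 m x y := by simp [Matrix.neg_mulVec]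
  have key : ∀ v : Fin m → ℝ, LinearMap.det (FL m v 1) * LinearMap.det (FL m v 1) = 1 := by
    intro v
    have e1 : FL m v 1 * (FL m 0 (-1) * (FL m v 1 * FL m 0 (-1))) = 1 := by
      rw [FL_comp _ _ _ _ _ h1, FL_comp _ _ _ _ _ hm, FL_comp _ _ _ _ _ h1, ← FL_one]
      congr 1 <;> simp [Matrix.neg_mulVec]
    have e2 : FL m 0 (-1) * FL m 0 (-1) = 1 := by
      rw [FL_comp _ _ _ _ _ hm, ← FL_one]
      congr 1 <;> simp
    have d1 := congrArg LinearMap.det e1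
    have d2 := congrArg LinearMap.det e2
    simp only [map_mul, map_one] at d1 d2
    linear_combination d1 - LinearMap.det (FL m v 1) * LinearMap.det (FL m v 1) * d2
  have e3 : FL m w 1 = FL m ((1/2 : ℝ) • w) 1 * FL m ((1/2 : ℝ) • w) 1 := by
    rw [FL_comp _ _ _ _ _ h1]
    congr 1
    · rw [Matrix.one_mulVec, ← add_smul]; norm_num
    · simp
  rw [e3, map_mul, key]

theorem FL_det (m : ℕ) (w : Fin m → ℝ) (B : Matrix (Fin m) (Fin m) ℝ) :
    LinearMap.det (FL m w B) = B.det := by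
  have h : FL m w B = FL m w 1 * FL m 0 B := by
    rw [FL_comp _ _ _ _ _ (by simp)]; simp
  rw [h, map_mul, FL_trans_det, FL_zero_det, one_mul]

theorem FL_iso (m : ℕ) (w : Fin m → ℝ) (B : Matrix (Fin m) (Fin m) ℝ)
    (hB : ∀ x y, bf 1 m (B.mulVec x) (B.mulVec y) = bf 1 m x y) (x y : ES m) :
    qf m (FL m w B x) (FL m w B y) = qf m x y := by
  obtain ⟨u, a, b, c⟩ := x
  obtain ⟨u', a', b', c'⟩ := y
  simp only [qf, FL, LinearMap.coe_mk, AddHom.coe_mk, map_add, map_smul, LinearMap.add_apply,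
    LinearMap.smul_apply, smul_eq_mul, hB, bf_comm 1 m (B.mulVec u) w]
  ring

/-- Every linear isometry of the model fixing the two vectors has the explicit form. -/
theorem FL_surj (m : ℕ) (A : ES m →ₗ[ℝ] ES m) (hA : ∀ x y, qf m (A x) (A y) = qf m x y)
    (h1 : A (0, 1, 0, 0) = (0, 1, 0, 0)) (h2 : A (0, 0, 0, 1) = (0, 0, 0, 1)) :
    ∃ w B, (∀ x y, bf 1 m (B.mulVec x) (B.mulVec y) = bf 1 m x y) ∧ A = FL m w B := by
  let Bl : (Fin m → ℝ) →ₗ[ℝ] (Fin m → ℝ) :=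
    LinearMap.fst ℝ _ _ ∘ₗ A ∘ₗ LinearMap.inl ℝ (Fin m → ℝ) (ℝ × ℝ × ℝ)
  have hBl : ∀ u, (LinearMap.toMatrix' Bl).mulVec u = (A (u, 0, 0, 0)).1 := by
    intro u
    rw [LinearMap.toMatrix'_mulVec]; rfl
  have b0 : ∀ x, (A x).2.2.1 = x.2.2.1 := by
    intro x
    have := hA (0, 1, 0, 0) x
    rw [h1] at this
    simpa [qf] using this
  have c0 : ∀ x, (A x).2.2.2 = x.2.2.2 := by
    intro x
    have := hA (0, 0, 0, 1) x
    rw [h2] at this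
    simpa [qf] using this
  have hJ := hA (0, 0, 1, 0) (0, 0, 1, 0)
  have hu := fun u => hA (0, 0, 1, 0) (u, 0, 0, 0)
  have huu := fun u v => hA (u, 0, 0, 0) (v, 0, 0, 0)
  simp only [qf, b0, c0] at hJ hu huu
  simp only [map_zero, LinearMap.zero_apply] at hJ hu huu
  refine ⟨(A (0, 0, 1, 0)).1, LinearMap.toMatrix' Bl, ?_, ?_⟩
  · intro x y
    rw [hBl, hBl]
    linarith [huu x y]
  · refine LinearMap.ext fun x => ?_
    obtain ⟨u, a, b, c⟩ := x
    have hx : A (u, a, b, c) = A (u, 0, 0, 0) + a • A (0, 1, 0, 0) + b • A (0, 0, 1, 0)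
        + c • A (0, 0, 0, 1) := by
      simp only [← map_smul, ← map_add]
      simp
    refine Prod.ext ?_ (Prod.ext ?_ (Prod.ext ?_ ?_))
    · simp only [FL, LinearMap.coe_mk, AddHom.coe_mk, hBl]
      rw [hx, h1, h2]; simp
    · simp only [FL, LinearMap.coe_mk, AddHom.coe_mk, hBl]
      rw [hx, h1, h2]
      simp only [Prod.snd_add, Prod.fst_add, Prod.smul_fst, Prod.smul_snd, smul_eq_mul]
      linear_combination hu u + b / 2 * hJ
    · simp [FL, b0]
    · simp [FL, c0]

/-- Existence of adapted coordinates. -/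
def Good (k : ℕ) (I X : Fin (k + 5) → ℝ) : Prop :=
  ∃ P : ES (k + 2) ≃ₗ[ℝ] (Fin (k + 5) → ℝ),
    (∀ x y, bf 2 (k + 5) (P x) (P y) = qf (k + 2) x y) ∧
    P (0, 1, 0, 0) = I ∧ P (0, 0, 0, 1) = X

/-- Reflection. -/
noncomputable def rfln (m : ℕ) (v x : Fin m → ℝ) : Fin m → ℝ :=
  x - (2 * bf 2 m v x / bf 2 m v v) • v

theorem refl_refl (m : ℕ) (v : Fin m → ℝ) (hv : bf 2 m v v ≠ 0) (x : Fin m → ℝ) :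
    rfln m v (rfln m v x) = x := by
  have h : 2 * bf 2 m v (rfln m v x) / bf 2 m v v = -(2 * bf 2 m v x / bf 2 m v v) := by
    simp only [rfln, map_sub, map_smul, smul_eq_mul]
    field_simp
    ring
  rw [rfln, h, rfln]; simp

theorem refl_iso (m : ℕ) (v : Fin m → ℝ) (hv : bf 2 m v v ≠ 0) (x y : Fin m → ℝ) :
    bf 2 m (rfln m v x) (rfln m v y) = bf 2 m x y := by
  simp only [rfln, map_sub, map_smul, smul_eq_mul, LinearMap.sub_apply, LinearMap.smul_apply,
    bf_comm 2 m x v]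
  field_simp
  ring

/-- Reflection as a linear equivalence. -/
noncomputable def reflE (m : ℕ) (v : Fin m → ℝ) (hv : bf 2 m v v ≠ 0) :
    (Fin m → ℝ) ≃ₗ[ℝ] (Fin m → ℝ) where
  toFun := rfln m v
  invFun := rfln m v
  left_inv := refl_refl m v hv
  right_inv := refl_refl m v hv
  map_add' x y := by
    simp only [rfln, map_add, mul_add, add_div, add_smul]; abel
  map_smul' c x := by
    simp only [rfln, map_smul, smul_eq_mul, RingHom.id_apply, smul_sub, smul_smul]
    congr 2; ring

theorem Good_of_refl (k : ℕ) (I X v : Fin (k + 5) → ℝ) (hv : bf 2 (k + 5) v v ≠ 0)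
    (h : Good k (rfln _ v I) (rfln _ v X)) : Good k I X := by
  obtain ⟨P, hP, h1, h2⟩ := h
  refine ⟨P.trans (reflE _ v hv), fun x y => ?_, ?_, ?_⟩
  · exact (refl_iso _ v hv _ _).trans (hP x y)
  · exact (congrArg (rfln _ v) h1).trans (refl_refl _ v hv _)
  · exact (congrArg (rfln _ v) h2).trans (refl_refl _ v hv _)

theorem refl_sub (m : ℕ) (x y : Fin m → ℝ) (h : bf 2 m x x = bf 2 m y y)
    (hv : bf 2 m (x - y) (x - y) ≠ 0) : rfln m (x - y) x = y := by
  have : 2 * bf 2 m (x - y) x / bf 2 m (x - y) (x - y) = 1 := by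
    rw [div_eq_one_iff_eq hv]
    simp only [map_sub, LinearMap.sub_apply, bf_comm 2 m y x]
    linear_combination h
  rw [rfln, this]; simp

theorem refl_fix (m : ℕ) (v x : Fin m → ℝ) (h : bf 2 m v x = 0) : rfln m v x = x := by
  rw [rfln, h]; simp

/-- Index of the last coordinate. -/
def iL (k : ℕ) : Fin (k + 5) := Fin.last (k + 4)

/-- Index of the last but one coordinate. -/
def iC (k : ℕ) : Fin (k + 5) := (Fin.last (k + 3)).castSucc

/-- Standard point. -/
noncomputable def X0 (k : ℕ) : Fin (k + 5) → ℝ := Pi.single (iL k) 1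

/-- Standard null vector. -/
noncomputable def I0 (k : ℕ) : Fin (k + 5) → ℝ := Pi.single 0 1 + Pi.single (iC k) 1

theorem iL_val (k : ℕ) : (iL k : ℕ) = k + 4 := rfl
theorem iC_val (k : ℕ) : (iC k : ℕ) = k + 3 := rfl

/-- Model coordinates. -/
noncomputable def P0 (k : ℕ) : ES (k + 2) ≃ₗ[ℝ] (Fin (k + 5) → ℝ) where
  toFun x := Fin.snoc (α := fun _ => ℝ) (Fin.snoc (α := fun _ => ℝ)
    (Fin.cons (x.2.1 - x.2.2.1 / 2) x.1 : Fin (k + 3) → ℝ)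
    (x.2.1 + x.2.2.1 / 2) : Fin (k + 4) → ℝ) x.2.2.2
  invFun y := (fun i => y i.succ.castSucc.castSucc,
    (y 0 + y (iC k)) / 2, y (iC k) - y 0, y (iL k))
  map_add' x y := by
    ext i
    refine Fin.lastCases ?_ (fun i => ?_) i
    · simp
    refine Fin.lastCases ?_ (fun i => ?_) i
    · simp; ring
    refine Fin.cases ?_ (fun i => ?_) i
    · simp; ring
    · simp [-Fin.castSucc_succ]
  map_smul' c x := by
    ext i
    refine Fin.lastCases ?_ (fun i => ?_) i
    · simp
    refine Fin.lastCases ?_ (fun i => ?_) i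
    · simp; ring
    refine Fin.cases ?_ (fun i => ?_) i
    · simp; ring
    · simp [-Fin.castSucc_succ]
  left_inv x := by
    have h0 : (0 : Fin (k + 5)) = (0 : Fin (k + 3)).castSucc.castSucc := rfl
    rw [h0]
    refine Prod.ext ?_ (Prod.ext ?_ (Prod.ext ?_ ?_))
    · ext i; simp [-Fin.castSucc_succ]
    · simp [iC]
    · simp [iC]
    · simp [iL]
  right_inv y := by
    ext i
    refine Fin.lastCases ?_ (fun i => ?_) i
    · simp [iL]
    refine Fin.lastCases ?_ (fun i => ?_) i
    · simp [iC]; ring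
    refine Fin.cases ?_ (fun i => ?_) i
    · simp; ring
    · simp [-Fin.castSucc_succ]

theorem Good_base (k : ℕ) : Good k (I0 k) (X0 k) := by
  refine ⟨P0 k, fun x y => ?_, ?_, ?_⟩
  · simp only [← bf_eq, formSig, qf]
    rw [Fin.sum_univ_castSucc, Fin.sum_univ_castSucc, Fin.sum_univ_succ]
    simp [P0, -Fin.castSucc_succ]
    ring
  · ext i
    refine Fin.lastCases ?_ (fun i => ?_) i
    · simp [P0, I0, iC, Pi.single_apply, Fin.ext_iff]
    refine Fin.lastCases ?_ (fun i => ?_) i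
    · simp [P0, I0, iC, Pi.single_apply, Fin.ext_iff]
    refine Fin.cases ?_ (fun i => ?_) i
    · simp [P0, I0, iC, Pi.single_apply, Fin.ext_iff]
    · have := i.2
      have e1 : i.succ.castSucc.castSucc ≠ (0 : Fin (k + 5)) := fun h => by
        have h' := congrArg Fin.val h
        simp only [Fin.val_castSucc, Fin.val_succ] at h'
        exact Nat.succ_ne_zero _ h'
      have e2 : i.succ.castSucc.castSucc ≠ iC k := by
        simp only [ne_eq, Fin.ext_iff, iC_val, Fin.val_castSucc, Fin.val_succ]; omega
      simp only [I0, Pi.add_apply, Pi.single_eq_of_ne e1, Pi.single_eq_of_ne e2]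
      simp [P0, -Fin.castSucc_succ]
  · ext i
    refine Fin.lastCases ?_ (fun i => ?_) i
    · simp [P0, X0, iL]
    refine Fin.lastCases ?_ (fun i => ?_) i
    · simp [P0, X0, iL, Pi.single_apply, Fin.ext_iff]
    refine Fin.cases ?_ (fun i => ?_) i
    · simp [P0, X0, iL, Pi.single_apply, Fin.ext_iff]
    · have := i.2
      have e2 : i.succ.castSucc.castSucc ≠ iL k := by
        simp only [ne_eq, Fin.ext_iff, iL_val, Fin.val_castSucc, Fin.val_succ]; omega
      simp only [X0, Pi.single_eq_of_ne e2]
      simp [P0, -Fin.castSucc_succ]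

theorem bf_X0 (k : ℕ) (x : Fin (k + 5) → ℝ) : bf 2 (k + 5) x (X0 k) = x (iL k) := by
  rw [X0, bf_single, if_neg (by rw [iL_val]; omega), mul_one]

theorem bf_I0 (k : ℕ) (x : Fin (k + 5) → ℝ) : bf 2 (k + 5) x (I0 k) = x (iC k) - x 0 := by
  rw [I0, map_add, bf_single, bf_single, if_pos (by simp), if_neg (by rw [iC_val]; omega)]
  ring

theorem ne1 (k : ℕ) : iL k ≠ iC k := by simp [Fin.ext_iff, iL_val, iC_val]
theorem ne2 (k : ℕ) : iL k ≠ 0 := by simp [Fin.ext_iff, iL_val]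
theorem ne3 (k : ℕ) : iC k ≠ 0 := by simp [Fin.ext_iff, iC_val]
theorem ne4 (k : ℕ) : iL k ≠ 1 := by simp [Fin.ext_iff, iL_val]
theorem ne5 (k : ℕ) : iC k ≠ 1 := by simp [Fin.ext_iff, iC_val]

theorem Good_L4 (k : ℕ) (I : Fin (k + 5) → ℝ) (hI : bf 2 _ I I = 0) (hX : I (iL k) = 0)
    (h : I (iC k) ≠ I 0) : Good k I (X0 k) := by
  have h00 : bf 2 _ (I0 k) (I0 k) = 0 := by
    rw [bf_I0]; simp [I0, ne3, (ne3 k).symm]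
  have hII : bf 2 _ I (I0 k) ≠ 0 := by rw [bf_I0]; exact sub_ne_zero.mpr h
  have hv : bf 2 _ (I - I0 k) (I - I0 k) ≠ 0 := by
    simp only [map_sub, LinearMap.sub_apply, hI, h00, bf_comm 2 _ (I0 k) I]
    intro h; apply hII; linarith
  refine Good_of_refl k _ _ (I - I0 k) hv ?_
  rw [refl_sub _ _ _ (hI.trans h00.symm) hv, refl_fix]
  · exact Good_base k
  · rw [bf_X0]; simp [hX, I0, ne1, ne2]

theorem Good_L3 (k : ℕ) (I : Fin (k + 5) → ℝ) (hI : bf 2 _ I I = 0) (hX : I (iL k) = 0)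
    (h : I 0 ≠ 0) : Good k I (X0 k) := by
  by_cases hc : I (iC k) = I 0
  · have hvv : ∀ x, bf 2 (k + 5) x (Pi.single (iC k) 1) = x (iC k) := by
      intro x
      rw [bf_single, if_neg (by rw [iC_val]; omega), mul_one]
    have hv : bf 2 (k + 5) (Pi.single (iC k) 1) (Pi.single (iC k) 1) ≠ 0 := by
      rw [hvv]; simp
    have hr : rfln _ (Pi.single (iC k) 1) I = I - (2 * I 0) • Pi.single (iC k) 1 := by
      rw [rfln, hvv, bf_comm, hvv]; simp [hc]
    refine Good_of_refl k _ _ _ hv ?_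
    rw [refl_fix _ _ (X0 k) (by rw [bf_X0]; simp [ne1])]
    refine Good_L4 k _ (by rw [refl_iso _ _ hv, hI]) ?_ ?_
    · rw [hr]; simp [hX, ne1]
    · rw [hr]
      simp [(ne3 k).symm, hc]
      intro h'; apply h; linarith
  · exact Good_L4 k I hI hX hc

theorem Good_L2 (k : ℕ) (I : Fin (k + 5) → ℝ) (hI : bf 2 _ I I = 0) (hX : I (iL k) = 0)
    (h : I ≠ 0) : Good k I (X0 k) := by
  by_cases h0 : I 0 = 0
  · have h1 : I 1 ≠ 0 := by
      intro h1
      apply h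
      rw [← bf_eq, formSig, Fin.sum_univ_succ, Fin.sum_univ_succ] at hI
      have e1 : (Fin.succ 0 : Fin (k + 5)) = 1 := rfl
      rw [e1, h0, h1] at hI
      simp at hI
      rw [Finset.sum_eq_zero_iff_of_nonneg (fun i _ => mul_self_nonneg _)] at hI
      ext i
      refine Fin.cases h0 (fun i => ?_) i
      refine Fin.cases h1 (fun i => ?_) i
      simpa using hI i (Finset.mem_univ _)
    let v : Fin (k + 5) → ℝ := Pi.single 0 1 - Pi.single 1 1
    have hvv : ∀ x, bf 2 (k + 5) x v = x 1 - x 0 := by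
      intro x
      simp only [v]
      rw [map_sub, bf_single, bf_single, if_pos (by simp), if_pos (by simp)]; ring
    have hv2 : bf 2 (k + 5) v v = -2 := by
      rw [hvv]; simp [v]; norm_num
    have hv : bf 2 (k + 5) v v ≠ 0 := by rw [hv2]; norm_num
    have hr : rfln _ v I = I + (I 1) • v := by
      rw [rfln, hv2, bf_comm, hvv, h0]; ext i; simp; ring
    refine Good_of_refl k _ _ _ hv ?_
    rw [refl_fix _ _ (X0 k) (by rw [bf_X0]; simp [v, ne2, ne4])]
    refine Good_L3 k _ (by rw [refl_iso _ _ hv, hI]) ?_ ?_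
    · rw [hr]; simp [hX, v, ne2, ne4]
    · rw [hr]; simp [v, h0, h1]
  · exact Good_L3 k I hI hX h0

theorem refl_ne (m : ℕ) (v x : Fin m → ℝ) (hv : bf 2 m v v ≠ 0) (h : x ≠ 0) : rfln m v x ≠ 0 := by
  intro h0
  apply h
  rw [← refl_refl m v hv x, h0]
  simp [rfln]

theorem Good_all (k : ℕ) (I X : Fin (k + 5) → ℝ) (hI : bf 2 _ I I = 0) (h : I ≠ 0)
    (hX : bf 2 _ X X = 1) (hIX : bf 2 _ I X = 0) : Good k I X := by
  have h00 : bf 2 _ (X0 k) (X0 k) = 1 := by rw [bf_X0]; simp [X0]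
  by_cases hv : bf 2 _ (X - X0 k) (X - X0 k) = 0
  · have hv' : bf 2 _ (X - -X0 k) (X - -X0 k) ≠ 0 := by
      simp only [map_sub, map_neg, LinearMap.sub_apply, LinearMap.neg_apply, hX, h00] at hv ⊢
      intro h; linarith
    have h00' : bf 2 _ (X0 k) (X0 k) ≠ 0 := by rw [h00]; norm_num
    have e1 : rfln _ (X - -X0 k) X = -X0 k := refl_sub _ _ _ (by simp [hX, h00]) hv'
    have e2 : rfln _ (X0 k) (-X0 k) = X0 k := by
      rw [rfln, map_neg, h00]; ext i; simp; ring
    refine Good_of_refl k _ _ _ hv' ?_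
    refine Good_of_refl k _ _ _ h00' ?_
    rw [e1, e2]
    refine Good_L2 k _ ?_ ?_ ?_
    · rw [refl_iso _ _ h00', refl_iso _ _ hv', hI]
    · refine (bf_X0 k _).symm.trans ?_
      have h3 := refl_iso _ _ h00' (rfln _ (X - -X0 k) I) (rfln _ (X - -X0 k) X)
      rw [refl_iso _ _ hv', e1, e2, hIX] at h3
      exact h3
    · exact refl_ne _ _ _ h00' (refl_ne _ _ _ hv' h)
  · have e1 : rfln _ (X - X0 k) X = X0 k := refl_sub _ _ _ (by rw [hX, h00]) hv
    refine Good_of_refl k _ _ _ hv ?_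
    rw [e1]
    refine Good_L2 k _ ?_ ?_ ?_
    · rw [refl_iso _ _ hv, hI]
    · refine (bf_X0 k _).symm.trans ?_
      have h3 := refl_iso _ _ hv I X
      rw [e1, hIX] at h3
      exact h3
    · exact refl_ne _ _ _ hv h

theorem FL_inj (m : ℕ) (w w' : Fin m → ℝ) (B B' : Matrix (Fin m) (Fin m) ℝ)
    (h : FL m w B = FL m w' B') : w = w' ∧ B = B' := by
  constructor
  · have := congrArg Prod.fst (LinearMap.congr_fun h (0, 0, 1, 0))
    simpa [FL] using this
  · refine Matrix.ext_of_mulVec_single fun i => ?_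
    have := congrArg Prod.fst (LinearMap.congr_fun h (Pi.single i 1, 0, 0, 0))
    simpa only [FL, LinearMap.coe_mk, AddHom.coe_mk, zero_smul, add_zero] using this

/-- The homomorphism from the semidirect product to the endomorphisms of the model. -/
noncomputable def homE (m : ℕ) :
    SemidirectProduct (Multiplicative (Fin m → ℝ)) (↥(specialIsometry 1 m))
        (subgroupMulVecHom (specialIsometry 1 m)) →* Module.End ℝ (ES m) where
  toFun g := FL m (Multiplicative.toAdd g.left) g.right.1.val
  map_one' := FL_one m
  map_mul' g h := (FL_comp m _ _ _ _ g.right.2.2).symm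

/-- The homomorphism to matrices. -/
noncomputable def homV (k : ℕ) (P : ES (k + 2) ≃ₗ[ℝ] (Fin (k + 5) → ℝ)) :
    SemidirectProduct (Multiplicative (Fin (k + 2) → ℝ)) (↥(specialIsometry 1 (k + 2)))
        (subgroupMulVecHom (specialIsometry 1 (k + 2))) →* (Matrix (Fin (k + 5)) (Fin (k + 5)) ℝ)ˣ :=
  MonoidHom.toHomUnits
    (((LinearMap.toMatrixAlgEquiv' (R := ℝ) (n := Fin (k + 5))).toMulEquiv.toMonoidHom.comp
      (P.conjRingEquiv.toMulEquiv.toMonoidHom)).comp (homE (k + 2)))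

theorem homV_val (k : ℕ) (P : ES (k + 2) ≃ₗ[ℝ] (Fin (k + 5) → ℝ)) (g) :
    ((homV k P g : (Matrix (Fin (k + 5)) (Fin (k + 5)) ℝ)ˣ) : Matrix (Fin (k + 5)) (Fin (k + 5)) ℝ) =
      LinearMap.toMatrix' ((P : ES (k + 2) →ₗ[ℝ] (Fin (k + 5) → ℝ)) ∘ₗ (homE (k + 2) g) ∘ₗ
        (P.symm : (Fin (k + 5) → ℝ) →ₗ[ℝ] ES (k + 2))) := rfl

theorem homV_mulVec (k : ℕ) (P : ES (k + 2) ≃ₗ[ℝ] (Fin (k + 5) → ℝ)) (g) (x) :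
    ((homV k P g : (Matrix (Fin (k + 5)) (Fin (k + 5)) ℝ)ˣ) :
      Matrix (Fin (k + 5)) (Fin (k + 5)) ℝ).mulVec x = P (homE (k + 2) g (P.symm x)) := by
  rw [homV_val, LinearMap.toMatrix'_mulVec]; rfl

theorem homV_mem (k : ℕ) (I X : Fin (k + 5) → ℝ) (P : ES (k + 2) ≃ₗ[ℝ] (Fin (k + 5) → ℝ))
    (hP : ∀ x y, bf 2 (k + 5) (P x) (P y) = qf (k + 2) x y)
    (h1 : P (0, 1, 0, 0) = I) (h2 : P (0, 0, 0, 1) = X) (g) :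
    homV k P g ∈ poincareGroup (k + 3) I ⊓ vecStab (k + 5) X := by
  refine ⟨⟨⟨?_, fun x y => ?_⟩, ?_⟩, ?_⟩
  · rw [homV_val, LinearMap.det_toMatrix', LinearMap.det_conj]
    exact (FL_det _ _ _).trans g.right.2.1
  · rw [homV_mulVec, homV_mulVec, bf_eq, bf_eq, hP]
    refine (FL_iso _ _ _ g.right.2.2 _ _).trans ?_
    rw [← hP]; simp
  · change Matrix.mulVec _ I = I
    rw [homV_mulVec, ← h1, P.symm_apply_apply]
    congr 1
    simp [homE, FL]
  · change Matrix.mulVec _ X = X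
    rw [homV_mulVec, ← h2, P.symm_apply_apply]
    congr 1
    simp [homE, FL]

theorem homV_inj (k : ℕ) (P : ES (k + 2) ≃ₗ[ℝ] (Fin (k + 5) → ℝ)) :
    Function.Injective (homV k P) := by
  intro g h hgh
  have : homE (k + 2) g = homE (k + 2) h := by
    refine LinearMap.ext fun x => ?_
    have := congrArg (fun u : (Matrix (Fin (k + 5)) (Fin (k + 5)) ℝ)ˣ =>
      (u : Matrix (Fin (k + 5)) (Fin (k + 5)) ℝ).mulVec (P x)) hgh
    simpa only [homV_mulVec, P.symm_apply_apply, EmbeddingLike.apply_eq_iff_eq] using this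
  obtain ⟨e1, e2⟩ := FL_inj _ _ _ _ _ this
  exact SemidirectProduct.ext (Multiplicative.toAdd.injective e1) (Subtype.ext (Units.ext e2))

theorem homV_surj (k : ℕ) (I X : Fin (k + 5) → ℝ) (P : ES (k + 2) ≃ₗ[ℝ] (Fin (k + 5) → ℝ))
    (hP : ∀ x y, bf 2 (k + 5) (P x) (P y) = qf (k + 2) x y)
    (h1 : P (0, 1, 0, 0) = I) (h2 : P (0, 0, 0, 1) = X)
    (A : (Matrix (Fin (k + 5)) (Fin (k + 5)) ℝ)ˣ)
    (hA : A ∈ poincareGroup (k + 3) I ⊓ vecStab (k + 5) X) : ∃ g, homV k P g = A := by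
  obtain ⟨⟨⟨hd, hf⟩, hI⟩, hX⟩ := hA
  change Matrix.mulVec _ I = I at hI
  change Matrix.mulVec _ X = X at hX
  let T : ES (k + 2) →ₗ[ℝ] ES (k + 2) :=
    (P.symm : (Fin (k + 5) → ℝ) →ₗ[ℝ] ES (k + 2)) ∘ₗ
      (Matrix.toLin' (A : Matrix (Fin (k + 5)) (Fin (k + 5)) ℝ)) ∘ₗ
      (P.symm.symm : ES (k + 2) →ₗ[ℝ] (Fin (k + 5) → ℝ))
  have hT : ∀ x, T x = P.symm ((A : Matrix (Fin (k + 5)) (Fin (k + 5)) ℝ).mulVec (P x)) :=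
    fun x => rfl
  obtain ⟨w, B, hB, hTB⟩ := FL_surj (k + 2) T
    (fun x y => by
      rw [← hP, ← hP, hT, hT, P.apply_symm_apply, P.apply_symm_apply]
      exact hf _ _)
    (by rw [hT, h1, hI, ← h1, P.symm_apply_apply])
    (by rw [hT, h2, hX, ← h2, P.symm_apply_apply])
  have hdB : B.det = 1 := by
    rw [← FL_det (k + 2) w B, ← hTB]
    have := LinearMap.det_conj (Matrix.toLin' (A : Matrix (Fin (k + 5)) (Fin (k + 5)) ℝ)) P.symm
    exact this.trans ((LinearMap.det_toLin' _).trans hd)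
  let Bu : (Matrix (Fin (k + 2)) (Fin (k + 2)) ℝ)ˣ :=
    Matrix.nonsingInvUnit B (by rw [hdB]; exact isUnit_one)
  refine ⟨⟨Multiplicative.ofAdd w, ⟨Bu, hdB, hB⟩⟩, Units.ext ?_⟩
  refine Matrix.ext_of_mulVec_single fun i => ?_
  rw [homV_mulVec]
  change P (FL (k + 2) w B _) = _
  rw [← hTB, hT, P.apply_symm_apply, P.apply_symm_apply]

/-- For `n ≥ 3` and any `X` in the flat-model orbit `Spi^n = M_{1,0}`, the stabilizer of
`X` in the Poincaré subgroup `G` is isomorphic, as a group, to the semidirect product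
`ℝ^{n-1} ⋊ SO(1,n-2)`, where `SO(1,n-2)` is the group of matrices of determinant one
preserving the standard Minkowski form `η' = formSig 1 (n-1)` of signature `(1,n-2)` on
`ℝ^{n-1}`, acting by matrix–vector multiplication. -/
theorem stabilizer_of_Spi_point_iso
    (n : ℕ) (hn : 3 ≤ n) (I : Fin (n + 2) → ℝ) (hI : I ≠ 0)
    (hII : formSig 2 (n + 2) I I = 0)
    (X : Fin (n + 2) → ℝ) (hX : X ∈ Mset n I 1 0) :
    Nonempty ((↥(poincareGroup n I ⊓ vecStab (n + 2) X)) ≃*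
      SemidirectProduct (Multiplicative (Fin (n - 1) → ℝ))
        (↥(specialIsometry 1 (n - 1)))
        (subgroupMulVecHom (specialIsometry 1 (n - 1)))) := by
  obtain ⟨k, rfl⟩ : ∃ k, n = k + 3 := ⟨n - 3, by omega⟩
  obtain ⟨hX1, hX2, -⟩ := hX
  obtain ⟨P, hP, h1, h2⟩ := Good_all k I X hII hI hX1 hX2
  exact ⟨(MulEquiv.ofBijective
    ((homV k P).codRestrict (poincareGroup (k + 3) I ⊓ vecStab (k + 5) X)
      (homV_mem k I X P hP h1 h2))
    ⟨fun g h hgh => homV_inj k P (congrArg Subtype.val hgh),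
     fun A => by
      obtain ⟨g, hg⟩ := homV_surj k I X P hP h1 h2 A.1 A.2
      exact ⟨g, Subtype.ext hg⟩⟩).symm⟩
end
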